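/- arXiv:1902.06404 — 2 statements merged into one kernel-verified Lean document; each statement's English description precedes it below -/
import Mathlib

section
/- In the two-state i.i.d. model with m(n) = ⌈c·n^{2+α}⌉ and l(n) = ⌈c'·n^{2+α}⌉ for some constants c > 0, c' > 0 and α > 0, and with Δ_n = n^{−(1+α/4)}, the empirical means X̄_u = (X_u(1)+⋯+X_u(m))/m and W̄_u = (W_u(1)+⋯+W_u(l))/l satisfy P(⋃_{u=2}^n {|X̄_u − W̄_1| ≤ Δ_n}) → 0 as n → ∞. Equivalently, since Ȳ_{Π(u)} = X̄_u, the anonymized empirical means of all users other than user 1 are, with probability tending to 1, all farther than Δ_n from user 1's training empirical mean W̄_1. -/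
open MeasureTheory ProbabilityTheory Filter
open scoped ENNReal NNReal

/-- Bernoulli measure on `Bool` with success probability `p`. -/
noncomputable def bern (p : ℝ) : Measure Bool :=
  ENNReal.ofReal p • Measure.dirac true + ENNReal.ofReal (1 - p) • Measure.dirac false

/-- Joint law of (parameters, actual traces, training traces) in the two-state i.i.d. model:
the parameters `p u` are i.i.d. with law `μP`, and conditionally on the parameters the
`n` actual traces (of length `m`) and training traces (of length `l`) consist of i.i.d.
`Bernoulli (p u)` samples, all mutually independent. -/
noncomputable def twoStateLaw (n m l : ℕ) (μP : Measure ℝ) :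
    Measure ((Fin n → ℝ) × (Fin n → Fin m → Bool) × (Fin n → Fin l → Bool)) :=
  (Measure.pi fun _ : Fin n => μP).bind fun p =>
    (Measure.dirac p).prod
      ((Measure.pi fun u : Fin n => Measure.pi fun _ : Fin m => bern (p u)).prod
        (Measure.pi fun u : Fin n => Measure.pi fun _ : Fin l => bern (p u)))

/-- Empirical mean of a Boolean sample. -/
noncomputable def empMean {m : ℕ} (x : Fin m → Bool) : ℝ :=
  (∑ k : Fin m, if x k then (1 : ℝ) else 0) / m

/-! Fix a user `u ≠ v`. If the empirical means `X̄_u` and `W̄_v` are within `t` of each other, then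
either the parameters `p_u` and `p_v` are within `3t`, which has probability at most `6 C t` when
the law of the parameters has density at most `C`, or one of the two empirical means is at least
`t` away from its parameter, which Hoeffding's inequality bounds by
`2 exp (-2 m t²) + 2 exp (-2 l t²)`. A union bound over the `n` users costs a factor `n`, and for
`t = n ^ (-(1 + α / 4))` and trace lengths of order `n ^ (2 + α)` the products are of order
`n ^ (-α / 4)` and `n * exp (-2 c n ^ (α / 2))`. -/

section Hoeffding

variable {Ω ι : Type*} {mΩ : MeasurableSpace Ω} {μ : Measure Ω}

lemma measureReal_le_abs_le_of_hasSubgaussianMGF {X : Ω → ℝ} {c : ℝ≥0}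
    (hX : HasSubgaussianMGF X c μ) {ε : ℝ} (hε : 0 ≤ ε) :
    μ.real {ω | ε ≤ |X ω|} ≤ 2 * Real.exp (-ε ^ 2 / (2 * c)) := by
  calc μ.real {ω | ε ≤ |X ω|}
      = μ.real ({ω | ε ≤ X ω} ∪ {ω | ε ≤ (-X) ω}) := by
        congr 1
        ext ω
        exact le_abs (a := ε) (b := X ω)
    _ ≤ μ.real {ω | ε ≤ X ω} + μ.real {ω | ε ≤ (-X) ω} := measureReal_union_le _ _
    _ ≤ 2 * Real.exp (-ε ^ 2 / (2 * c)) := by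
        linarith [hX.measure_ge_le hε, hX.neg.measure_ge_le hε]

lemma measureReal_le_abs_sum_sub_integral_le {X : ι → Ω → ℝ} {s : Finset ι} {a b : ℝ}
    (h_indep : iIndepFun X μ) (hX : ∀ i ∈ s, AEMeasurable (X i) μ)
    (hab : ∀ i ∈ s, ∀ᵐ ω ∂μ, X i ω ∈ Set.Icc a b) {ε : ℝ} (hε : 0 ≤ ε) :
    μ.real {ω | ε ≤ |∑ i ∈ s, (X i ω - μ[X i])|} ≤
      2 * Real.exp (-2 * ε ^ 2 / (s.card * (b - a) ^ 2)) := by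
  have := h_indep.isProbabilityMeasure
  have h_indep_centered : iIndepFun (fun i ω ↦ X i ω - μ[X i]) μ :=
    h_indep.comp (fun i x ↦ x - ∫ ω, X i ω ∂μ) fun _ ↦ by fun_prop
  have h_sum := HasSubgaussianMGF.sum_of_iIndepFun h_indep_centered fun i hi ↦
    hasSubgaussianMGF_of_mem_Icc (hX i hi) (hab i hi)
  have h_exponent : -ε ^ 2 / (2 * ((∑ _i ∈ s, (‖b - a‖₊ / 2) ^ 2 : ℝ≥0) : ℝ)) =
      -2 * ε ^ 2 / (s.card * (b - a) ^ 2) := by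
    generalize b - a = d
    simp only [Finset.sum_const, nsmul_eq_mul, NNReal.coe_mul, NNReal.coe_natCast, NNReal.coe_pow,
      NNReal.coe_div, coe_nnnorm, NNReal.coe_ofNat, div_pow, Real.norm_eq_abs, sq_abs]
    ring
  simpa only [h_exponent] using measureReal_le_abs_le_of_hasSubgaussianMGF h_sum hε

end Hoeffding

section Bernoulli

variable {p : ℝ}

instance : IsFiniteMeasure (bern p) where
  measure_univ_lt_top := by simp [bern, ENNReal.add_lt_top]

lemma isProbabilityMeasure_bern (hp : p ∈ Set.Icc 0 1) : IsProbabilityMeasure (bern p) where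
  measure_univ := by simp [bern, ← ENNReal.ofReal_add hp.1 (sub_nonneg.2 hp.2)]

lemma integral_ite_bern (hp : 0 ≤ p) : ∫ b, (if b then (1 : ℝ) else 0) ∂bern p = p := by
  rw [bern, integral_add_measure (Integrable.of_finite.smul_measure ENNReal.ofReal_ne_top)
    (Integrable.of_finite.smul_measure ENNReal.ofReal_ne_top)]
  simp [hp]

lemma pi_bern_le_abs_empMean_sub_le (hp : p ∈ Set.Icc 0 1) (m : ℕ) {t : ℝ} (ht : 0 ≤ t) :
    (Measure.pi fun _ : Fin m ↦ bern p) {x | t ≤ |empMean x - p|} ≤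
      ENNReal.ofReal (2 * Real.exp (-2 * (m * t ^ 2))) := by
  have := isProbabilityMeasure_bern hp
  set ν := Measure.pi fun _ : Fin m ↦ bern p
  let ind : Bool → ℝ := fun b ↦ if b then 1 else 0
  have h_mean (i : Fin m) : ∫ x, ind (x i) ∂ν = p :=
    (integral_comp_eval (μ := fun _ : Fin m ↦ bern p)
      (measurable_of_finite ind).aestronglyMeasurable).trans (integral_ite_bern hp.1)
  have h_indep : iIndepFun (fun i (x : Fin m → Bool) ↦ ind (x i)) ν :=
    iIndepFun_pi fun _ ↦ (measurable_of_finite ind).aemeasurable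
  have h_hoeffding := measureReal_le_abs_sum_sub_integral_le (s := Finset.univ) (a := 0) (b := 1)
    h_indep (fun i _ ↦ (measurable_of_finite _).aemeasurable)
    (fun i _ ↦ .of_forall fun x ↦ by simp only [ind]; split <;> simp)
    (mul_nonneg m.cast_nonneg ht)
  have h_sub : {x : Fin m → Bool | t ≤ |empMean x - p|} ⊆
      {x | m * t ≤ |∑ i, (ind (x i) - ∫ y, ind (y i) ∂ν)|} := by
    intro x hx
    have h_sum : ∑ i, (ind (x i) - ∫ y, ind (y i) ∂ν) = m * (empMean x - p) := by
      rcases m.eq_zero_or_pos with rfl | hm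
      · simp
      · simp only [h_mean, Finset.sum_sub_distrib, Finset.sum_const, Finset.card_univ,
          Fintype.card_fin, nsmul_eq_mul, empMean, ind]
        field_simp
    simp only [Set.mem_ofPred_eq, h_sum, abs_mul, Nat.abs_cast] at hx ⊢
    gcongr
  have h_exponent : -2 * (m * t) ^ 2 / ((Finset.univ : Finset (Fin m)).card * (1 - 0) ^ 2) =
      -2 * (m * t ^ 2) := by
    rcases m.eq_zero_or_pos with rfl | hm
    · simp
    · simp only [Finset.card_univ, Fintype.card_fin]
      field_simp
      ring
  rw [← ofReal_measureReal]
  exact ENNReal.ofReal_le_ofReal ((measureReal_mono h_sub).trans (h_exponent ▸ h_hoeffding))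

end Bernoulli

section Parameters

lemma withDensity_le_smul_restrict {α : Type*} {mα : MeasurableSpace α} {μ : Measure α}
    {f : α → ℝ≥0∞} {s : Set α} (hs : MeasurableSet s) {C : ℝ≥0∞} (hf₀ : ∀ x ∉ s, f x = 0)
    (hf : ∀ x ∈ s, f x ≤ C) :
    μ.withDensity f ≤ C • μ.restrict s := by
  rw [← withDensity_const, ← withDensity_indicator hs]
  refine withDensity_mono (.of_forall fun x ↦ ?_)
  by_cases hx : x ∈ s
  · simpa [hx] using hf x hx
  · simp [hx, hf₀ x hx]

lemma ae_pi_forall_mem_of_le_smul_restrict {ι α : Type*} [Fintype ι] {mα : MeasurableSpace α}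
    {μ ν : Measure α} [IsProbabilityMeasure μ] {s : Set α} (hs : MeasurableSet s) {C : ℝ≥0}
    (hμ : μ ≤ C • ν.restrict s) :
    ∀ᵐ x ∂Measure.pi fun _ : ι ↦ μ, ∀ i, x i ∈ s := by
  have h_abs : μ ≪ ν.restrict s := Measure.absolutelyContinuous_of_le_smul (c := C) hμ
  exact ae_all_iff.2 fun i ↦ (measurePreserving_eval (fun _ : ι ↦ μ) i).quasiMeasurePreserving.ae
    (h_abs.ae_le (ae_restrict_mem hs))

lemma prod_abs_sub_le_le {μ ν : Measure ℝ} [IsProbabilityMeasure μ] [SFinite ν] {C : ℝ≥0}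
    (hν : ν ≤ C • volume) (r : ℝ) :
    (μ.prod ν) {q | |q.1 - q.2| ≤ r} ≤ C * ENNReal.ofReal (2 * r) := by
  have h_section (x : ℝ) :
      ν (Prod.mk x ⁻¹' {q | |q.1 - q.2| ≤ r}) ≤ C * ENNReal.ofReal (2 * r) := by
    have h_ball : Prod.mk x ⁻¹' {q : ℝ × ℝ | |q.1 - q.2| ≤ r} = Metric.closedBall x r := by
      ext y
      simp [Real.dist_eq, abs_sub_comm]
    calc ν (Prod.mk x ⁻¹' {q | |q.1 - q.2| ≤ r})
        ≤ (C • volume) (Metric.closedBall x r) := h_ball ▸ hν _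
      _ = C * ENNReal.ofReal (2 * r) := by
        simp only [Measure.smul_apply, Real.volume_closedBall, ENNReal.smul_def, smul_eq_mul]
  rw [Measure.prod_apply (measurableSet_le (by fun_prop) (by fun_prop))]
  exact (lintegral_mono h_section).trans_eq (by simp)

lemma measurePreserving_eval_prodMk_eval {ι : Type*} [Fintype ι] {α : ι → Type*}
    {mα : ∀ i, MeasurableSpace (α i)} (μ : ∀ i, Measure (α i)) [∀ i, IsProbabilityMeasure (μ i)]
    {i j : ι} (hij : i ≠ j) :
    MeasurePreserving (fun x ↦ (x i, x j)) (Measure.pi μ) ((μ i).prod (μ j)) where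
  measurable := by fun_prop
  map_eq := by
    have h_indep : iIndepFun (fun k (x : ∀ k, α k) ↦ x k) (Measure.pi μ) :=
      iIndepFun_pi (X := fun _ ↦ id) fun _ ↦ aemeasurable_id
    rw [(h_indep.indepFun hij).map_prod_eq_prod_map_map
      (measurable_pi_apply i).aemeasurable (measurable_pi_apply j).aemeasurable,
      (measurePreserving_eval μ i).map_eq, (measurePreserving_eval μ j).map_eq]

lemma pi_abs_sub_le_le {ι : Type*} [Fintype ι] {μP : Measure ℝ} [IsProbabilityMeasure μP]
    {C : ℝ≥0} (hμP : μP ≤ C • volume) {u v : ι} (huv : u ≠ v) (r : ℝ) :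
    (Measure.pi fun _ : ι ↦ μP) {p | |p u - p v| ≤ r} ≤ C * ENNReal.ofReal (2 * r) :=
  ((measurePreserving_eval_prodMk_eval (fun _ : ι ↦ μP) huv).measure_preimage
    (measurableSet_le (by fun_prop) (by fun_prop)).nullMeasurableSet).trans_le
      (prod_abs_sub_le_le hμP r)

end Parameters

section Traces

variable {n : ℕ} {p : Fin n → ℝ} {u v : Fin n} {t : ℝ}

lemma pi_pi_bern_le_abs_empMean_sub_le (hp : ∀ u, p u ∈ Set.Icc 0 1) (m : ℕ) (u : Fin n)
    (ht : 0 ≤ t) :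
    (Measure.pi fun u ↦ Measure.pi fun _ : Fin m ↦ bern (p u)) {x | t ≤ |empMean (x u) - p u|} ≤
      ENNReal.ofReal (2 * Real.exp (-2 * (m * t ^ 2))) := by
  have (u : Fin n) := isProbabilityMeasure_bern (hp u)
  exact ((measurePreserving_eval (fun u ↦ Measure.pi fun _ : Fin m ↦ bern (p u)) u).measure_preimage
    (s := {x | t ≤ |empMean x - p u|}) MeasurableSet.of_discrete.nullMeasurableSet).trans_le
      (pi_bern_le_abs_empMean_sub_le (hp u) m ht)

/-- The conditional law of the actual and training traces of `n` users given their parameters `p`,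
that is, the second component of the kernel averaged in `twoStateLaw`. -/
noncomputable def traceLaw (m l : ℕ) (p : Fin n → ℝ) :
    Measure ((Fin n → Fin m → Bool) × (Fin n → Fin l → Bool)) :=
  (Measure.pi fun u ↦ Measure.pi fun _ ↦ bern (p u)).prod
    (Measure.pi fun u ↦ Measure.pi fun _ ↦ bern (p u))

instance (m l : ℕ) (p : Fin n → ℝ) : SFinite (traceLaw m l p) := by
  unfold traceLaw
  infer_instance

lemma isProbabilityMeasure_traceLaw (hp : ∀ u, p u ∈ Set.Icc 0 1) (m l : ℕ) :
    IsProbabilityMeasure (traceLaw m l p) := by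
  have (u : Fin n) := isProbabilityMeasure_bern (hp u)
  unfold traceLaw
  infer_instance

lemma traceLaw_abs_empMean_sub_empMean_le_le_of_lt (hp : ∀ u, p u ∈ Set.Icc 0 1) (m l : ℕ)
    (ht : 0 ≤ t) (huv : 3 * t < |p u - p v|) :
    traceLaw m l p {z | |empMean (z.1 u) - empMean (z.2 v)| ≤ t} ≤
      ENNReal.ofReal (2 * Real.exp (-2 * (m * t ^ 2))) +
        ENNReal.ofReal (2 * Real.exp (-2 * (l * t ^ 2))) := by
  have h_sub : {z : (Fin n → Fin m → Bool) × (Fin n → Fin l → Bool) |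
        |empMean (z.1 u) - empMean (z.2 v)| ≤ t} ⊆
      Prod.fst ⁻¹' {x | t ≤ |empMean (x u) - p u|} ∪
        Prod.snd ⁻¹' {y | t ≤ |empMean (y v) - p v|} := by
    intro z (hz : _ ≤ t)
    by_contra! h_near
    simp only [Set.mem_union, Set.mem_preimage, Set.mem_ofPred_eq, not_or, not_le] at h_near
    have h₁ := abs_sub_le (p u) (empMean (z.1 u)) (p v)
    have h₂ := abs_sub_le (empMean (z.1 u)) (empMean (z.2 v)) (p v)
    rw [abs_sub_comm (p u) (empMean _)] at h₁
    linarith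
  have (u : Fin n) := isProbabilityMeasure_bern (hp u)
  refine (measure_mono h_sub).trans <| (measure_union_le _ _).trans ?_
  unfold traceLaw
  rw [measurePreserving_fst.measure_preimage MeasurableSet.of_discrete.nullMeasurableSet,
    measurePreserving_snd.measure_preimage MeasurableSet.of_discrete.nullMeasurableSet]
  exact add_le_add (pi_pi_bern_le_abs_empMean_sub_le hp m u ht)
    (pi_pi_bern_le_abs_empMean_sub_le hp l v ht)

lemma twoStateLaw_snd_mem_le (m l : ℕ) (μP : Measure ℝ)
    (s : Set ((Fin n → Fin m → Bool) × (Fin n → Fin l → Bool))) :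
    twoStateLaw n m l μP {z | z.2 ∈ s} ≤ ∫⁻ p, traceLaw m l p s ∂Measure.pi fun _ ↦ μP := by
  have h_snd : {z : (Fin n → ℝ) × (Fin n → Fin m → Bool) × (Fin n → Fin l → Bool) | z.2 ∈ s} =
      Set.univ ×ˢ s := Set.univ_prod.symm
  rw [h_snd]
  refine (Measure.bind_apply_le _ (MeasurableSet.univ.prod .of_discrete)).trans_eq ?_
  refine lintegral_congr fun p ↦ ?_
  change ((Measure.dirac p).prod (traceLaw m l p)) (Set.univ ×ˢ s) = traceLaw m l p s
  rw [Measure.prod_prod, measure_univ, one_mul]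

end Traces

section TwoStateModel

variable {n m l : ℕ} {μP : Measure ℝ} [IsProbabilityMeasure μP] {C : ℝ≥0}

lemma twoStateLaw_abs_empMean_sub_empMean_le_le
    (hμP : μP ≤ C • volume.restrict (Set.Ioo 0 1)) {u v : Fin n} (huv : u ≠ v) (t : ℝ) :
    twoStateLaw n m l μP {z | |empMean (z.2.1 u) - empMean (z.2.2 v)| ≤ t} ≤
      C * ENNReal.ofReal (2 * (3 * t)) +
        (ENNReal.ofReal (2 * Real.exp (-2 * (m * t ^ 2))) +
          ENNReal.ofReal (2 * Real.exp (-2 * (l * t ^ 2)))) := by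
  rcases lt_or_ge t 0 with ht | ht
  · simp [((abs_nonneg _).trans_lt' ht).not_ge]
  set E := ENNReal.ofReal (2 * Real.exp (-2 * (m * t ^ 2))) +
    ENNReal.ofReal (2 * Real.exp (-2 * (l * t ^ 2)))
  have h_mem := ae_pi_forall_mem_of_le_smul_restrict (ι := Fin n) measurableSet_Ioo hμP
  calc twoStateLaw n m l μP {z | |empMean (z.2.1 u) - empMean (z.2.2 v)| ≤ t}
      ≤ ∫⁻ p, traceLaw m l p {z | |empMean (z.1 u) - empMean (z.2 v)| ≤ t}
          ∂Measure.pi fun _ : Fin n ↦ μP := twoStateLaw_snd_mem_le m l μP _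
    _ ≤ ∫⁻ p, ({p : Fin n → ℝ | |p u - p v| ≤ 3 * t}.indicator 1 p + E)
          ∂Measure.pi fun _ : Fin n ↦ μP := by
        refine lintegral_mono_ae (h_mem.mono fun p hp ↦ ?_)
        have hp' (i : Fin n) : p i ∈ Set.Icc 0 1 := Set.Ioo_subset_Icc_self (hp i)
        have := isProbabilityMeasure_traceLaw hp' m l
        by_cases h_close : |p u - p v| ≤ 3 * t
        · simpa [h_close] using prob_le_one.trans le_self_add
        · rw [Set.indicator_of_notMem (by exact h_close), zero_add]
          exact traceLaw_abs_empMean_sub_empMean_le_le_of_lt hp' m l ht (not_le.1 h_close)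
    _ = (Measure.pi fun _ : Fin n ↦ μP) {p | |p u - p v| ≤ 3 * t} + E := by
        rw [lintegral_add_right _ measurable_const,
          lintegral_indicator_one (measurableSet_le (by fun_prop) (by fun_prop))]
        simp
    _ ≤ C * ENNReal.ofReal (2 * (3 * t)) + E := by
        gcongr
        exact pi_abs_sub_le_le (hμP.trans (smul_le_smul_left _ Measure.restrict_le_self)) huv _

lemma measure_exists_ne_abs_empMean_sub_empMean_le_le
    (hμP : μP ≤ C • volume.restrict (Set.Ioo 0 1)) {Ω : Type*} {mΩ : MeasurableSpace Ω}
    {μ : Measure Ω} {P : Ω → Fin n → ℝ} {X : Ω → Fin n → Fin m → Bool}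
    {W : Ω → Fin n → Fin l → Bool}
    (hlaw : HasLaw (fun ω ↦ (P ω, X ω, W ω)) (twoStateLaw n m l μP) μ) (v : Fin n) (t : ℝ) :
    μ {ω | ∃ u, u ≠ v ∧ |empMean (X ω u) - empMean (W ω v)| ≤ t} ≤
      n * (C * ENNReal.ofReal (2 * (3 * t)) +
        (ENNReal.ofReal (2 * Real.exp (-2 * (m * t ^ 2))) +
          ENNReal.ofReal (2 * Real.exp (-2 * (l * t ^ 2))))) := by
  set B := C * ENNReal.ofReal (2 * (3 * t)) + (ENNReal.ofReal (2 * Real.exp (-2 * (m * t ^ 2))) +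
    ENNReal.ofReal (2 * Real.exp (-2 * (l * t ^ 2))))
  have h_pair (u : Fin n) : μ {ω | u ≠ v ∧ |empMean (X ω u) - empMean (W ω v)| ≤ t} ≤ B := by
    by_cases huv : u = v
    · simp [huv]
    · simp only [ne_eq, huv, not_false_eq_true, true_and]
      refine (Measure.le_map_apply hlaw.aemeasurable
        {z | |empMean (z.2.1 u) - empMean (z.2.2 v)| ≤ t}).trans ?_
      rw [hlaw.map_eq]
      exact twoStateLaw_abs_empMean_sub_empMean_le_le hμP huv t
  calc μ {ω | ∃ u, u ≠ v ∧ |empMean (X ω u) - empMean (W ω v)| ≤ t}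
      = μ (⋃ u, {ω | u ≠ v ∧ |empMean (X ω u) - empMean (W ω v)| ≤ t}) := by
        rw [Set.ofPred_exists]
    _ ≤ ∑ u, μ {ω | u ≠ v ∧ |empMean (X ω u) - empMean (W ω v)| ≤ t} :=
        measure_iUnion_fintype_le _ _
    _ ≤ ∑ _u : Fin n, B := Finset.sum_le_sum fun u _ ↦ h_pair u
    _ = n * B := by simp

end TwoStateModel

section Asymptotics

lemma tendsto_natCast_mul_ofReal {a : ℕ → ℝ}
    (ha : Tendsto (fun n : ℕ ↦ n * a n) atTop (nhds 0)) :
    Tendsto (fun n : ℕ ↦ n * ENNReal.ofReal (a n)) atTop (nhds 0) := by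
  simpa [ENNReal.ofReal_mul] using ENNReal.tendsto_ofReal ha

lemma tendsto_natCast_mul_rpow_neg {β : ℝ} (hβ : 0 < β) :
    Tendsto (fun n : ℕ ↦ (n : ℝ) * (n : ℝ) ^ (-(1 + β))) atTop (nhds 0) := by
  refine ((tendsto_rpow_neg_atTop hβ).comp tendsto_natCast_atTop_atTop).congr' ?_
  filter_upwards [eventually_gt_atTop 0] with n hn
  have hn' : (0 : ℝ) < n := Nat.cast_pos.2 hn
  rw [Function.comp_apply, ← Real.rpow_one_add' hn'.le (by linarith)]
  ring_nf

lemma tendsto_natCast_mul_exp_neg_mul_rpow {b β : ℝ} (hb : 0 < b) (hβ : 0 < β) :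
    Tendsto (fun n : ℕ ↦ n * Real.exp (-b * (n : ℝ) ^ β)) atTop (nhds 0) := by
  have h_pow : Tendsto (fun n : ℕ ↦ (n : ℝ) ^ β) atTop atTop :=
    (tendsto_rpow_atTop hβ).comp tendsto_natCast_atTop_atTop
  refine ((tendsto_rpow_mul_exp_neg_mul_atTop_nhds_zero β⁻¹ b hb).comp h_pow).congr fun n ↦ ?_
  rw [Function.comp_apply, Real.rpow_rpow_inv n.cast_nonneg hβ.ne']

lemma tendsto_natCast_mul_exp_neg_two_mul {a : ℕ → ℝ} {c α : ℝ} (hc : 0 < c) (hα : 0 < α)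
    (ha : ∀ n : ℕ, c * (n : ℝ) ^ (2 + α) ≤ a n) :
    Tendsto (fun n : ℕ ↦ n * Real.exp (-2 * (a n * ((n : ℝ) ^ (-(1 + α / 4))) ^ 2))) atTop
      (nhds 0) := by
  refine squeeze_zero' (.of_forall fun n ↦ by positivity) ?_
    (tendsto_natCast_mul_exp_neg_mul_rpow (mul_pos two_pos hc) (half_pos hα))
  filter_upwards [eventually_gt_atTop 0] with n hn
  have hn' : (0 : ℝ) < n := Nat.cast_pos.2 hn
  have h_le : c * (n : ℝ) ^ (α / 2) ≤ a n * ((n : ℝ) ^ (-(1 + α / 4))) ^ 2 :=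
    calc c * (n : ℝ) ^ (α / 2)
        = c * (n : ℝ) ^ (2 + α) * ((n : ℝ) ^ (-(1 + α / 4))) ^ 2 := by
          rw [← Real.rpow_mul_natCast hn'.le, mul_assoc, ← Real.rpow_add hn']
          ring_nf
      _ ≤ a n * ((n : ℝ) ^ (-(1 + α / 4))) ^ 2 := by
          gcongr
          exact ha n
  gcongr n * Real.exp ?_
  linarith

end Asymptotics

theorem other_users_means_far_from_W1_general {μP : Measure ℝ} [IsProbabilityMeasure μP] {C : ℝ≥0}
    (hμP : μP ≤ C • volume.restrict (Set.Ioo 0 1)) {m l : ℕ → ℕ} {Δ : ℕ → ℝ}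
    (hΔ : Tendsto (fun n : ℕ ↦ n * Δ n) atTop (nhds 0))
    (hm : Tendsto (fun n : ℕ ↦ n * Real.exp (-2 * (m n * Δ n ^ 2))) atTop (nhds 0))
    (hl : Tendsto (fun n : ℕ ↦ n * Real.exp (-2 * (l n * Δ n ^ 2))) atTop (nhds 0))
    {Ω : ℕ → Type*} {mΩ : ∀ n, MeasurableSpace (Ω n)} {μ : ∀ n, Measure (Ω n)}
    {P : ∀ n, Ω n → Fin n → ℝ} {X : ∀ n, Ω n → Fin n → Fin (m n) → Bool}
    {W : ∀ n, Ω n → Fin n → Fin (l n) → Bool}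
    (hlaw : ∀ n, HasLaw (fun ω ↦ (P n ω, X n ω, W n ω)) (twoStateLaw n (m n) (l n) μP) (μ n)) :
    Tendsto (fun n ↦ μ n {ω | ∃ (hn : 0 < n) (u : Fin n), u ≠ ⟨0, hn⟩ ∧
      |empMean (X n ω u) - empMean (W n ω ⟨0, hn⟩)| ≤ Δ n}) atTop (nhds 0) := by
  have h_params : Tendsto (fun n : ℕ ↦ C * (n * ENNReal.ofReal (2 * (3 * Δ n)))) atTop
      (nhds 0) := by
    have h := (hΔ.const_mul 6).congr fun n ↦ show _ = n * (2 * (3 * Δ n)) by ring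
    rw [mul_zero] at h
    simpa using ENNReal.Tendsto.const_mul (a := C) (tendsto_natCast_mul_ofReal h) (.inr (by simp))
  have h_traces {k : ℕ → ℕ}
      (hk : Tendsto (fun n : ℕ ↦ n * Real.exp (-2 * (k n * Δ n ^ 2))) atTop (nhds 0)) :
      Tendsto (fun n : ℕ ↦ n * ENNReal.ofReal (2 * Real.exp (-2 * (k n * Δ n ^ 2)))) atTop
        (nhds 0) :=
    tendsto_natCast_mul_ofReal (by simpa [mul_left_comm] using hk.const_mul 2)
  have h_bound := h_params.add ((h_traces hm).add (h_traces hl))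
  simp only [add_zero] at h_bound
  refine tendsto_of_tendsto_of_tendsto_of_le_of_le' tendsto_const_nhds h_bound
    (.of_forall fun _ ↦ zero_le) ?_
  filter_upwards [eventually_gt_atTop 0] with n hn
  simpa [hn, mul_add, mul_left_comm] using
    measure_exists_ne_abs_empMean_sub_empMean_le_le hμP (hlaw n) ⟨0, hn⟩ (Δ n)

/-- **Separation of the other users' empirical means from user 1's training mean, in the
two-state i.i.d. model.**  With `m n = ⌈c n^{2+α}⌉`, `l n = ⌈c' n^{2+α}⌉` and
`Δ_n = n^{-(1+α/4)}`, the empirical means satisfy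
`P(⋃_{u=2}^n {|X̄_u − W̄_1| ≤ Δ_n}) → 0` as `n → ∞`.  Equivalently, since
`Ȳ_{Π(u)} = X̄_u`, with probability tending to `1` the anonymized empirical means of all
users other than user 1 are farther than `Δ_n` from user 1's training empirical mean. -/
theorem other_users_means_far_from_W1
    (f : ℝ → ℝ) (δ₁ δ₂ : ℝ) (hδ₁ : 0 < δ₁)
    (μP : Measure ℝ) [IsProbabilityMeasure μP]
    (hμP : μP = volume.withDensity fun x => ENNReal.ofReal (f x))
    (hf0 : ∀ x ∉ Set.Ioo (0 : ℝ) 1, f x = 0)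
    (hf : ∀ x ∈ Set.Ioo (0 : ℝ) 1, δ₁ < f x ∧ f x < δ₂)
    (m l : ℕ → ℕ) (c c' α : ℝ) (hc : 0 < c) (hc' : 0 < c') (hα : 0 < α)
    (hm : ∀ n : ℕ, m n = ⌈c * (n : ℝ) ^ ((2 : ℝ) + α)⌉₊)
    (hl : ∀ n : ℕ, l n = ⌈c' * (n : ℝ) ^ ((2 : ℝ) + α)⌉₊)
    (Ω : ℕ → Type) (mΩ : ∀ n, MeasurableSpace (Ω n))
    (μ : ∀ n, Measure (Ω n)) (hμ : ∀ n, IsProbabilityMeasure (μ n))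
    (P : ∀ n, Ω n → Fin n → ℝ)
    (X : ∀ n, Ω n → Fin n → Fin (m n) → Bool)
    (W : ∀ n, Ω n → Fin n → Fin (l n) → Bool)
    (hP : ∀ n, Measurable (P n)) (hX : ∀ n, Measurable (X n))
    (hW : ∀ n, Measurable (W n))
    (hlaw : ∀ n, Measure.map (fun ω => (P n ω, X n ω, W n ω)) (μ n) =
      twoStateLaw n (m n) (l n) μP) :
    Tendsto (fun n =>
        (μ n {ω | ∃ (hn : 0 < n) (u : Fin n), u ≠ ⟨0, hn⟩ ∧
            |empMean (X n ω u) - empMean (W n ω ⟨0, hn⟩)| ≤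
              (n : ℝ) ^ (-(1 + α / 4))}).toReal)
      atTop (nhds 0) := by
  have hμP_le : μP ≤ δ₂.toNNReal • volume.restrict (Set.Ioo 0 1) :=
    hμP.trans_le (withDensity_le_smul_restrict measurableSet_Ioo (fun x hx ↦ by simp [hf0 x hx])
      fun x hx ↦ ENNReal.ofReal_le_ofReal (hf x hx).2.le)
  exact (ENNReal.tendsto_toReal ENNReal.zero_ne_top).comp <|
    other_users_means_far_from_W1_general hμP_le (tendsto_natCast_mul_rpow_neg (by positivity))
      (tendsto_natCast_mul_exp_neg_two_mul hc hα fun n ↦ hm n ▸ Nat.le_ceil _)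
      (tendsto_natCast_mul_exp_neg_two_mul hc' hα fun n ↦ hl n ▸ Nat.le_ceil _)
      fun n ↦ ⟨by have := hP n; have := hX n; have := hW n; fun_prop, hlaw n⟩
end

section
/- In the two-state i.i.d. model with m(n) = ⌈c·n^{2+α}⌉ and l(n) = ⌈c'·n^{2+α}⌉ for some constants c > 0, c' > 0 and α > 0, and with Δ_n = n^{−(1+α/4)}, the empirical means X̄_1 = (X_1(1)+⋯+X_1(m))/m and W̄_1 = (W_1(1)+⋯+W_1(l))/l satisfy P(|X̄_1 − W̄_1| ≤ Δ_n) → 1 as n → ∞. -/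
open MeasureTheory ProbabilityTheory Filter
open scoped ENNReal NNReal

/-!
Conditionally on the parameter `q` of user 1, the two empirical means are independent, both have
mean `q`, and their variances are at most `1 / (4 m)` and `1 / (4 l)`. By Chebyshev's inequality
their difference exceeds `Δ` with probability at most `(1 / m + 1 / l) / (4 Δ ^ 2)`, uniformly in
`q`, so the same bound survives averaging over `q`. It tends to `0` as soon as `m Δ ^ 2` and
`l Δ ^ 2` tend to infinity; for the given `m`, `l` and `Δ` these quantities are of order
`n ^ (α / 2)`.
-/

section SampleMean

variable {ι α : Type*} [Fintype ι]

/-- Mean of the statistic `g` over the finite sample `x`, used to compare `empMean` with its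
expectation. By the convention `x / 0 = 0`, the mean over an empty sample is `0`. -/
noncomputable def sampleMean (g : α → ℝ) (x : ι → α) : ℝ :=
  (∑ i, g (x i)) / Fintype.card ι

variable [MeasurableSpace α] {μ : Measure α} [IsProbabilityMeasure μ] {g : α → ℝ}

lemma memLp_sampleMean {r : ℝ≥0∞} (hg : MemLp g r μ) :
    MemLp (sampleMean (ι := ι) g) r (Measure.pi fun _ => μ) := by
  have hsum : MemLp (fun x : ι → α => ∑ i, g (x i)) r (Measure.pi fun _ => μ) :=
    memLp_finsetSum _ fun i _ => hg.comp_measurePreserving (measurePreserving_eval _ i)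
  simpa only [sampleMean, div_eq_mul_inv] using! hsum.mul_const _

lemma integral_sampleMean [Nonempty ι] (hg : Integrable g μ) :
    ∫ x : ι → α, sampleMean g x ∂(Measure.pi fun _ => μ) = ∫ a, g a ∂μ := by
  have hcoord (i : ι) : ∫ x : ι → α, g (x i) ∂(Measure.pi fun _ => μ) = ∫ a, g a ∂μ :=
    integral_comp_eval (μ := fun _ : ι => μ) hg.aestronglyMeasurable
  simp only [sampleMean]
  rw [integral_div, integral_finsetSum _ fun i _ => integrable_comp_eval hg]
  simp only [hcoord, Finset.sum_const, Finset.card_univ, nsmul_eq_mul]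
  field_simp

lemma variance_sampleMean (hg : MemLp g 2 μ) :
    Var[sampleMean (ι := ι) g; Measure.pi fun _ => μ] = Var[g; μ] / Fintype.card ι := by
  have hsum : Var[fun x : ι → α => ∑ i, g (x i); Measure.pi fun _ => μ] =
      Fintype.card ι * Var[g; μ] := by
    have h := variance_sum_pi (μ := fun _ : ι => μ) (X := fun _ => g) fun _ => hg
    rw [Finset.sum_fn] at h
    simpa only [Finset.sum_const, Finset.card_univ, nsmul_eq_mul] using h
  change Var[fun x : ι → α => (∑ i, g (x i)) / Fintype.card ι; _] = _
  simp only [div_eq_mul_inv]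
  rw [variance_mul_const, hsum]
  rcases eq_or_ne (Fintype.card ι : ℝ) 0 with h | h
  · simp [h]
  · field_simp

end SampleMean

lemma prod_ge_abs_sub_le_variance_div_sq {α β : Type*} [MeasurableSpace α] [MeasurableSpace β]
    {μ : Measure α} {ν : Measure β} [IsProbabilityMeasure μ] [IsProbabilityMeasure ν]
    {X : α → ℝ} {Y : β → ℝ} (hX : MemLp X 2 μ) (hY : MemLp Y 2 ν)
    (hmean : ∫ a, X a ∂μ = ∫ b, Y b ∂ν) {ε : ℝ} (hε : 0 < ε) :
    μ.prod ν {z | ε ≤ |X z.1 - Y z.2|} ≤ ENNReal.ofReal ((Var[X; μ] + Var[Y; ν]) / ε ^ 2) := by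
  have hX' : MemLp (fun z : α × β => X z.1) 2 (μ.prod ν) := hX.comp_fst ν
  have hY' : MemLp (fun z : α × β => Y z.2) 2 (μ.prod ν) := hY.comp_snd μ
  have hint : ∫ z, (X z.1 - Y z.2) ∂(μ.prod ν) = 0 := by
    rw [integral_sub (hX'.integrable one_le_two) (hY'.integrable one_le_two),
      integral_fun_fst, integral_fun_snd]
    simp [hmean]
  have hvar : Var[fun z : α × β => X z.1 - Y z.2; μ.prod ν] = Var[X; μ] + Var[Y; ν] := by
    have h := variance_add_prod hX hY.neg
    simpa only [Pi.neg_apply, ← sub_eq_add_neg, variance_neg] using h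
  have hcheb := meas_ge_le_variance_div_sq (X := fun z : α × β => X z.1 - Y z.2) (hX'.sub hY') hε
  simpa only [hint, sub_zero, hvar] using hcheb

lemma bind_apply_le_lintegral {α β : Type*} [MeasurableSpace α] [MeasurableSpace β]
    (μ : Measure α) (κ : α → Measure β) {s : Set β} (hs : MeasurableSet s) :
    μ.bind κ s ≤ ∫⁻ a, κ a s ∂μ := by
  by_cases hκ : AEMeasurable κ μ
  · exact (Measure.bind_apply hs hκ).le
  · -- Here `μ.bind κ` is the junk value `0`.
    simp [Measure.bind, Measure.map_of_not_aemeasurable hκ]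

lemma ae_mem_withDensity_of_eq_zero {α : Type*} [MeasurableSpace α] {μ : Measure α}
    {g : α → ℝ≥0∞} {s : Set α} (hs : MeasurableSet s) (hg : ∀ x ∉ s, g x = 0) :
    ∀ᵐ x ∂(μ.withDensity g), x ∈ s := by
  change μ.withDensity g sᶜ = 0
  rw [withDensity_apply _ hs.compl, setLIntegral_congr_fun hs.compl hg, lintegral_zero]

section Bernoulli

variable {q : ℝ}

lemma isProbabilityMeasure_bern_s12 (hq : q ∈ Set.Icc (0 : ℝ) 1) : IsProbabilityMeasure (bern q) := by
  constructor
  simp [bern, ← ENNReal.ofReal_add hq.1 (sub_nonneg.2 hq.2)]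

lemma memLp_indicator_bern (hq : q ∈ Set.Icc (0 : ℝ) 1) (r : ℝ≥0∞) :
    MemLp (fun b : Bool => if b then (1 : ℝ) else 0) r (bern q) := by
  have := isProbabilityMeasure_bern_s12 hq
  exact .of_discrete

lemma integral_indicator_bern (hq : q ∈ Set.Icc (0 : ℝ) 1) :
    ∫ b : Bool, (if b then (1 : ℝ) else 0) ∂(bern q) = q := by
  have := isProbabilityMeasure_bern_s12 hq
  rw [integral_fintype ((memLp_indicator_bern hq 1).integrable le_rfl)]
  simp [bern, measureReal_def, hq.1]

lemma variance_indicator_bern_le (hq : q ∈ Set.Icc (0 : ℝ) 1) :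
    Var[fun b : Bool => if b then (1 : ℝ) else 0; bern q] ≤ 1 / 4 := by
  have := isProbabilityMeasure_bern_s12 hq
  have h := variance_le_sq_of_bounded (μ := bern q) (a := 0) (b := 1)
    (X := fun b : Bool => if b then (1 : ℝ) else 0)
    (.of_forall fun b => by cases b <;> simp) (measurable_of_finite _).aemeasurable
  exact h.trans_eq (by norm_num)

lemma empMean_eq_sampleMean (m : ℕ) :
    empMean (m := m) = sampleMean fun b : Bool => if b then (1 : ℝ) else 0 := by
  funext x
  simp only [empMean, sampleMean, Fintype.card_fin]

lemma memLp_empMean (hq : q ∈ Set.Icc (0 : ℝ) 1) (m : ℕ) (r : ℝ≥0∞) :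
    MemLp (empMean (m := m)) r (Measure.pi fun _ => bern q) := by
  have := isProbabilityMeasure_bern_s12 hq
  rw [empMean_eq_sampleMean]
  exact memLp_sampleMean (memLp_indicator_bern hq r)

lemma integral_empMean (hq : q ∈ Set.Icc (0 : ℝ) 1) {m : ℕ} (hm : 0 < m) :
    ∫ x : Fin m → Bool, empMean x ∂(Measure.pi fun _ => bern q) = q := by
  have := isProbabilityMeasure_bern_s12 hq
  have := Fin.pos_iff_nonempty.1 hm
  rw [empMean_eq_sampleMean, integral_sampleMean ((memLp_indicator_bern hq 1).integrable le_rfl),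
    integral_indicator_bern hq]

lemma variance_empMean_le (hq : q ∈ Set.Icc (0 : ℝ) 1) (m : ℕ) :
    Var[empMean (m := m); Measure.pi fun _ => bern q] ≤ 1 / (4 * m) := by
  have := isProbabilityMeasure_bern_s12 hq
  rw [empMean_eq_sampleMean, variance_sampleMean (memLp_indicator_bern hq 2), Fintype.card_fin,
    ← div_div]
  gcongr
  exact variance_indicator_bern_le hq

end Bernoulli

/-- Joint law of the actual trace (of length `m`) and the training trace (of length `l`) of a
single user with parameter `q`. -/
noncomputable def userTraceLaw (m l : ℕ) (q : ℝ) : Measure ((Fin m → Bool) × (Fin l → Bool)) :=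
  (Measure.pi fun _ => bern q).prod (Measure.pi fun _ => bern q)

lemma userTraceLaw_ge_abs_empMean_sub_le {m l : ℕ} (hm : 0 < m) (hl : 0 < l) {q : ℝ}
    (hq : q ∈ Set.Icc (0 : ℝ) 1) {Δ : ℝ} (hΔ : 0 < Δ) :
    userTraceLaw m l q {z | Δ ≤ |empMean z.1 - empMean z.2|} ≤
      ENNReal.ofReal ((1 / (4 * m) + 1 / (4 * l)) / Δ ^ 2) := by
  have := isProbabilityMeasure_bern_s12 hq
  refine (prod_ge_abs_sub_le_variance_div_sq (memLp_empMean hq m 2) (memLp_empMean hq l 2)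
    ((integral_empMean hq hm).trans (integral_empMean hq hl).symm) hΔ).trans ?_
  gcongr
  exacts [variance_empMean_le hq m, variance_empMean_le hq l]

section TwoStateLaw

variable {n m l : ℕ}

lemma measurePreserving_userTraces (i : Fin n) {p : Fin n → ℝ}
    (hp : ∀ u, p u ∈ Set.Icc (0 : ℝ) 1) :
    MeasurePreserving
      (fun z : (Fin n → ℝ) × (Fin n → Fin m → Bool) × (Fin n → Fin l → Bool) =>
        (z.2.1 i, z.2.2 i))
      ((Measure.dirac p).prod
        ((Measure.pi fun u => Measure.pi fun _ => bern (p u)).prod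
          (Measure.pi fun u => Measure.pi fun _ => bern (p u))))
      (userTraceLaw m l (p i)) := by
  have (u : Fin n) := isProbabilityMeasure_bern_s12 (hp u)
  exact ((measurePreserving_eval _ i).prod (measurePreserving_eval _ i)).comp measurePreserving_snd

variable {μP : Measure ℝ} [IsProbabilityMeasure μP]

lemma twoStateLaw_userTraces_mem_le (hμP : ∀ᵐ q ∂μP, q ∈ Set.Icc (0 : ℝ) 1) (i : Fin n)
    {s : Set ((Fin m → Bool) × (Fin l → Bool))} {B : ℝ≥0∞}
    (hs : ∀ q ∈ Set.Icc (0 : ℝ) 1, userTraceLaw m l q s ≤ B) :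
    twoStateLaw n m l μP {z | (z.2.1 i, z.2.2 i) ∈ s} ≤ B := by
  have hp : ∀ᵐ p ∂(Measure.pi fun _ : Fin n => μP), ∀ u, p u ∈ Set.Icc (0 : ℝ) 1 :=
    ae_all_iff.2 fun u => (Measure.quasiMeasurePreserving_eval (fun _ => μP) u).ae hμP
  have hs_meas : MeasurableSet s := s.toFinite.measurableSet
  have hpre : MeasurableSet
      {z : (Fin n → ℝ) × (Fin n → Fin m → Bool) × (Fin n → Fin l → Bool) |
        (z.2.1 i, z.2.2 i) ∈ s} :=
    (by fun_prop : Measurable fun z : (Fin n → ℝ) × (Fin n → Fin m → Bool) ×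
      (Fin n → Fin l → Bool) => (z.2.1 i, z.2.2 i)) hs_meas
  calc twoStateLaw n m l μP {z | (z.2.1 i, z.2.2 i) ∈ s}
      ≤ ∫⁻ p, _ ∂(Measure.pi fun _ : Fin n => μP) := bind_apply_le_lintegral _ _ hpre
    _ ≤ ∫⁻ _, B ∂(Measure.pi fun _ : Fin n => μP) := lintegral_mono_ae <| hp.mono fun p hp =>
        ((measurePreserving_userTraces i hp).measure_preimage
          hs_meas.nullMeasurableSet).trans_le (hs _ (hp i))
    _ = B := by simp

lemma one_sub_le_measureReal_abs_empMean_sub_le (hμP : ∀ᵐ q ∂μP, q ∈ Set.Icc (0 : ℝ) 1)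
    {Ω : Type*} [MeasurableSpace Ω] {μ : Measure Ω} [IsProbabilityMeasure μ] {P : Ω → Fin n → ℝ}
    {X : Ω → Fin n → Fin m → Bool} {W : Ω → Fin n → Fin l → Bool}
    (hP : Measurable P) (hX : Measurable X) (hW : Measurable W)
    (hlaw : μ.map (fun ω => (P ω, X ω, W ω)) = twoStateLaw n m l μP)
    (hm : 0 < m) (hl : 0 < l) (i : Fin n) {Δ : ℝ} (hΔ : 0 < Δ) :
    1 - (1 / (4 * m) + 1 / (4 * l)) / Δ ^ 2 ≤
      μ.real {ω | |empMean (X ω i) - empMean (W ω i)| ≤ Δ} := by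
  let far : Set ((Fin m → Bool) × (Fin l → Bool)) := {z | Δ ≤ |empMean z.1 - empMean z.2|}
  have hfar : MeasurableSet ((fun ω => (X ω i, W ω i)) ⁻¹' far) :=
    (by fun_prop : Measurable fun ω => (X ω i, W ω i)) far.toFinite.measurableSet
  have hprob : μ ((fun ω => (X ω i, W ω i)) ⁻¹' far) ≤
      ENNReal.ofReal ((1 / (4 * m) + 1 / (4 * l)) / Δ ^ 2) := by
    have h := twoStateLaw_userTraces_mem_le hμP i fun q hq =>
      userTraceLaw_ge_abs_empMean_sub_le hm hl hq hΔ
    rw [← hlaw] at h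
    exact (Measure.le_map_apply (hP.prodMk (hX.prodMk hW)).aemeasurable _).trans h
  have hreal := ENNReal.toReal_le_of_le_ofReal (by positivity) hprob
  calc 1 - (1 / (4 * m) + 1 / (4 * l)) / Δ ^ 2
      ≤ 1 - μ.real ((fun ω => (X ω i, W ω i)) ⁻¹' far) := sub_le_sub_left hreal 1
    _ = μ.real ((fun ω => (X ω i, W ω i)) ⁻¹' far)ᶜ := (probReal_compl_eq_one_sub hfar).symm
    _ ≤ μ.real {ω | |empMean (X ω i) - empMean (W ω i)| ≤ Δ} :=
        measureReal_mono fun ω (hω : ¬ Δ ≤ |empMean (X ω i) - empMean (W ω i)|) => (not_le.1 hω).le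

end TwoStateLaw

lemma tendsto_natCeil_mul_rpow_mul_sq_atTop {c α : ℝ} (hc : 0 < c) (hα : 0 < α) :
    Tendsto (fun n : ℕ => (⌈c * (n : ℝ) ^ (2 + α)⌉₊ : ℝ) * ((n : ℝ) ^ (-(1 + α / 4))) ^ 2)
      atTop atTop := by
  have hlim : Tendsto (fun n : ℕ => c * (n : ℝ) ^ (α / 2)) atTop atTop :=
    ((tendsto_rpow_atTop (half_pos hα)).comp tendsto_natCast_atTop_atTop).const_mul_atTop hc
  refine tendsto_atTop_mono' _ ?_ hlim
  filter_upwards [eventually_gt_atTop 0] with n hn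
  have hn' : (0 : ℝ) < n := Nat.cast_pos.2 hn
  calc c * (n : ℝ) ^ (α / 2) = c * (n : ℝ) ^ (2 + α) * ((n : ℝ) ^ (-(1 + α / 4))) ^ 2 := by
        rw [← Real.rpow_mul_natCast hn'.le, mul_assoc, ← Real.rpow_add hn']
        congr 2
        push_cast
        ring
    _ ≤ ⌈c * (n : ℝ) ^ (2 + α)⌉₊ * ((n : ℝ) ^ (-(1 + α / 4))) ^ 2 := by
        gcongr
        exact Nat.le_ceil _

theorem user1_mean_close_to_W1_general {μP : Measure ℝ} [IsProbabilityMeasure μP]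
    (hμP : ∀ᵐ q ∂μP, q ∈ Set.Icc (0 : ℝ) 1) {m l : ℕ → ℕ} {Δ : ℕ → ℝ} (hΔ : ∀ n, 0 ≤ Δ n)
    (hm : Tendsto (fun n => m n * Δ n ^ 2) atTop atTop)
    (hl : Tendsto (fun n => l n * Δ n ^ 2) atTop atTop)
    {Ω : ℕ → Type*} [∀ n, MeasurableSpace (Ω n)] {μ : ∀ n, Measure (Ω n)}
    [∀ n, IsProbabilityMeasure (μ n)] {P : ∀ n, Ω n → Fin n → ℝ}
    {X : ∀ n, Ω n → Fin n → Fin (m n) → Bool} {W : ∀ n, Ω n → Fin n → Fin (l n) → Bool}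
    (hP : ∀ n, Measurable (P n)) (hX : ∀ n, Measurable (X n)) (hW : ∀ n, Measurable (W n))
    (hlaw : ∀ n, (μ n).map (fun ω => (P n ω, X n ω, W n ω)) = twoStateLaw n (m n) (l n) μP) :
    Tendsto (fun n => (μ n).real {ω | ∀ hn : 0 < n,
      |empMean (X n ω ⟨0, hn⟩) - empMean (W n ω ⟨0, hn⟩)| ≤ Δ n}) atTop (nhds 1) := by
  have hbound :
      Tendsto (fun n => 1 - (1 / (4 * m n) + 1 / (4 * l n)) / Δ n ^ 2) atTop (nhds 1) := by
    have h := (((tendsto_inv_atTop_zero.comp hm).add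
      (tendsto_inv_atTop_zero.comp hl)).const_mul (1 / 4)).const_sub 1
    simp only [add_zero, mul_zero, sub_zero] at h
    refine h.congr fun n => ?_
    simp only [Function.comp_apply, mul_inv]
    ring
  refine tendsto_of_tendsto_of_tendsto_of_le_of_le' hbound tendsto_const_nhds ?_
    (.of_forall fun n => measureReal_le_one)
  filter_upwards [eventually_gt_atTop 0, hm.eventually_gt_atTop 0, hl.eventually_gt_atTop 0]
    with n hn hmn hln
  have hΔn : 0 < Δ n := (hΔ n).lt_of_ne' fun h => by simp [h] at hmn
  have hm0 : 0 < m n := Nat.pos_of_ne_zero fun h => by simp [h] at hmn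
  have hl0 : 0 < l n := Nat.pos_of_ne_zero fun h => by simp [h] at hln
  simpa only [hn, forall_true_left] using one_sub_le_measureReal_abs_empMean_sub_le hμP
    (hP n) (hX n) (hW n) (hlaw n) hm0 hl0 ⟨0, hn⟩ hΔn

/-- **Closeness of user 1's empirical means in the two-state i.i.d. model.**  With
`m n = ⌈c n^{2+α}⌉`, `l n = ⌈c' n^{2+α}⌉` and `Δ_n = n^{-(1+α/4)}`, the empirical means
satisfy `P(|X̄_1 − W̄_1| ≤ Δ_n) → 1` as `n → ∞`.  (Since `Y_{Π(1)} = X_1` under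
anonymization, `X̄_1` is the anonymized empirical mean `Ȳ_{Π(1)}` of user 1.) -/
theorem user1_mean_close_to_W1
    (f : ℝ → ℝ) (δ₁ δ₂ : ℝ) (hδ₁ : 0 < δ₁)
    (μP : Measure ℝ) [IsProbabilityMeasure μP]
    (hμP : μP = volume.withDensity fun x => ENNReal.ofReal (f x))
    (hf0 : ∀ x ∉ Set.Ioo (0 : ℝ) 1, f x = 0)
    (hf : ∀ x ∈ Set.Ioo (0 : ℝ) 1, δ₁ < f x ∧ f x < δ₂)
    (m l : ℕ → ℕ) (c c' α : ℝ) (hc : 0 < c) (hc' : 0 < c') (hα : 0 < α)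
    (hm : ∀ n : ℕ, m n = ⌈c * (n : ℝ) ^ ((2 : ℝ) + α)⌉₊)
    (hl : ∀ n : ℕ, l n = ⌈c' * (n : ℝ) ^ ((2 : ℝ) + α)⌉₊)
    (Ω : ℕ → Type) (mΩ : ∀ n, MeasurableSpace (Ω n))
    (μ : ∀ n, Measure (Ω n)) (hμ : ∀ n, IsProbabilityMeasure (μ n))
    (P : ∀ n, Ω n → Fin n → ℝ)
    (X : ∀ n, Ω n → Fin n → Fin (m n) → Bool)
    (W : ∀ n, Ω n → Fin n → Fin (l n) → Bool)
    (hP : ∀ n, Measurable (P n)) (hX : ∀ n, Measurable (X n))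
    (hW : ∀ n, Measurable (W n))
    (hlaw : ∀ n, Measure.map (fun ω => (P n ω, X n ω, W n ω)) (μ n) =
      twoStateLaw n (m n) (l n) μP) :
    Tendsto (fun n =>
        (μ n {ω | ∀ hn : 0 < n,
            |empMean (X n ω ⟨0, hn⟩) - empMean (W n ω ⟨0, hn⟩)| ≤
              (n : ℝ) ^ (-(1 + α / 4))}).toReal)
      atTop (nhds 1) := by
  have hsupp : ∀ᵐ q ∂μP, q ∈ Set.Icc (0 : ℝ) 1 :=
    hμP ▸ (ae_mem_withDensity_of_eq_zero measurableSet_Ioo fun x hx => by simp [hf0 x hx]).mono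
      fun _ hx => Set.Ioo_subset_Icc_self hx
  exact user1_mean_close_to_W1_general hsupp (fun n => by positivity)
    (by simpa only [hm] using tendsto_natCeil_mul_rpow_mul_sq_atTop hc hα)
    (by simpa only [hl] using tendsto_natCeil_mul_rpow_mul_sq_atTop hc' hα) hP hX hW hlaw
end
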